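/- Fix integers d,e ≥ 1 and n ≥ 0. For all full binary trees t, t' ∈ T_n, the two conditions ld(t) ~^d ld(t') and rd(t) ~^e rd(t') both hold if and only if φ(t) = φ(t'). In particular, the equivalence classes of the relation 't ~ t' iff ld(t) ~^d ld(t') and rd(t) ~^e rd(t')' on T_n are exactly the fibers of the map φ. -/

import Mathlib

/-- Full binary trees (every internal node has exactly two children). -/
inductive BTree : Type
  | leaf : BTree
  | node : BTree → BTree → BTree
deriving DecidableEq

namespace BTree

/-- Number of leaves of a full binary tree. -/
def numLeaves : BTree → ℕ
  | leaf => 1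
  | node l r => l.numLeaves + r.numLeaves

/-- The list of pairs (left depth, right depth) of the leaves, in preorder. -/
def leafDepths : BTree → List (ℕ × ℕ)
  | leaf => [(0, 0)]
  | node l r =>
      (l.leafDepths.map fun p => (p.1 + 1, p.2)) ++ (r.leafDepths.map fun p => (p.1, p.2 + 1))

/-- The left depth sequence `ld(t)` of the leaves of `t`, in preorder. -/
def ld (t : BTree) : List ℕ := t.leafDepths.map Prod.fst

/-- The right depth sequence `rd(t)` of the leaves of `t`, in preorder. -/
def rd (t : BTree) : List ℕ := t.leafDepths.map Prod.snd

end BTree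

/-- `b ~^d c` : the sequences have equal length and agree at every position where
either entry is `< d`. -/
def DepthEq (d : ℕ) : List ℕ → List ℕ → Prop :=
  List.Forall₂ (fun a b => min a b < d → a = b)

/-- `b ~_k c` : entrywise congruence mod `k` (and equal length). -/
def ModListEq (k : ℕ) : List ℕ → List ℕ → Prop :=
  List.Forall₂ (fun a b => a % k = b % k)

/-- The relation `t ~ t'` iff `ld(t) ~^d ld(t')` and `rd(t) ~^e rd(t')`. -/
def DeRel (d e : ℕ) (t t' : BTree) : Prop :=
  DepthEq d t.ld t'.ld ∧ DepthEq e t.rd t'.rd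

/-- The relation `t ~ t'` iff `ld(t) ~_k^d ld(t')` (i.e. `ld(t) ~_k ld(t')` and
`ld(t) ~^d ld(t')`). -/
def DkRel (d k : ℕ) (t t' : BTree) : Prop :=
  ModListEq k t.ld t'.ld ∧ DepthEq d t.ld t'.ld

/-- `T_n`: full binary trees with `n+1` leaves. -/
def Tn (n : ℕ) : Type := {t : BTree // t.numLeaves = n + 1}

/-- `C^{d,e}_n`: the number of equivalence classes of the relation `DeRel d e` on `T_n`. -/
noncomputable def Cde (d e n : ℕ) : ℕ :=
  Nat.card (Quot (fun t t' : Tn n => DeRel d e t.1 t'.1))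

/-- `C^d_{k,n}`: the number of equivalence classes of `ld(t) ~_k^d ld(t')` on `T_n`. -/
noncomputable def Cdk (d k n : ℕ) : ℕ :=
  Nat.card (Quot (fun t t' : Tn n => DkRel d k t.1 t'.1))

/-- Leaf-weighted binary trees. -/
inductive WTree : Type
  | leaf : ℕ → WTree
  | node : WTree → WTree → WTree
deriving DecidableEq

/-- `phiAux d e ldep rdep t`: the result of contracting, in the tree `t` whose root sits at
a node of left depth `ldep` and right depth `rdep`, the maximal subtree of each maximal
`(d,e)`-contractible node to a single leaf weighted by its number of leaves, all remaining
leaves getting weight `1`.  (A node is `(d,e)`-contractible if its left depth is at least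
`d-1` and its right depth is at least `e-1`; a contractible node is maximal if its parent
is not contractible.  Every descendant of a contractible node is contractible, so the
top-down recursion below contracts exactly at the maximal contractible nodes.) -/
def phiAux (d e : ℕ) : ℕ → ℕ → BTree → WTree
  | _, _, BTree.leaf => WTree.leaf 1
  | ldep, rdep, BTree.node l r =>
      if d - 1 ≤ ldep ∧ e - 1 ≤ rdep then WTree.leaf (BTree.node l r).numLeaves
      else WTree.node (phiAux d e (ldep + 1) rdep l) (phiAux d e ldep (rdep + 1) r)

/-- The map `φ` of the paper, applied starting at the root (left depth 0, right depth 0). -/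
def phi (d e : ℕ) (t : BTree) : WTree := phiAux d e 0 0 t

/-!
Passing to a left child lowers the left threshold `d` by one (truncated at `0`), and passing to a
right child lowers `e` likewise; both the relation and `φ` obey this recursion, so the theorem
follows by induction once two facts are known. When `d, e ≤ 1` neither side sees more than the
number of leaves, because the last leaf is the only one of left depth `0` and the first leaf the
only one of right depth `0`. Otherwise, say `2 ≤ d`: the first leaf of left depth at most `1` is the
last leaf of the left subtree, so the relation determines where the depth sequences split between
the two subtrees.
-/

namespace DepthEq

variable {d : ℕ} {u v : List ℕ}

theorem refl (d : ℕ) (u : List ℕ) : DepthEq d u u :=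
  List.forall₂_same.2 fun _ _ _ => rfl

theorem length_eq (h : DepthEq d u v) : u.length = v.length :=
  List.Forall₂.length_eq h

theorem findIdx_le_eq {k : ℕ} (hk : k < d) (h : DepthEq d u v) :
    u.findIdx (· ≤ k) = v.findIdx (· ≤ k) := by
  induction h with
  | nil => rfl
  | @cons a b _ _ hab _ ih =>
    have hiff : a ≤ k ↔ b ≤ k := by omega
    simp only [List.findIdx_cons, hiff, ih]

end DepthEq

theorem depthEq_zero_iff {u v : List ℕ} : DepthEq 0 u v ↔ u.length = v.length := by
  simp [DepthEq, List.forall₂_iff_get]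

theorem depthEq_map_succ_iff {d : ℕ} {u v : List ℕ} :
    DepthEq d (u.map (· + 1)) (v.map (· + 1)) ↔ DepthEq (d - 1) u v := by
  have hshift : ∀ a b : ℕ, (min (a + 1) (b + 1) < d → a + 1 = b + 1) ↔
      (min a b < d - 1 → a = b) := by omega
  simp only [DepthEq, List.forall₂_map_left_iff, List.forall₂_map_right_iff, hshift]

theorem depthEq_append_iff {d : ℕ} {u u' v v' : List ℕ} (h : u.length = u'.length) :
    DepthEq d (u ++ v) (u' ++ v') ↔ DepthEq d u u' ∧ DepthEq d v v' := by
  refine ⟨fun huv => ⟨?_, ?_⟩, fun ⟨hu, hv⟩ => List.rel_append hu hv⟩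
  · rw [← List.take_left (l₁ := u) (l₂ := v), ← List.take_left (l₁ := u') (l₂ := v'), ← h]
    exact List.forall₂_take u.length huv
  · rw [← List.drop_left (l₁ := u) (l₂ := v), ← List.drop_left (l₁ := u') (l₂ := v'), ← h]
    exact List.forall₂_drop u.length huv

namespace BTree

theorem ld_node (l r : BTree) : (node l r).ld = l.ld.map (· + 1) ++ r.ld := by
  simp [ld, leafDepths, Function.comp_def]

theorem rd_node (l r : BTree) : (node l r).rd = l.rd ++ r.rd.map (· + 1) := by
  simp [rd, leafDepths, Function.comp_def]

theorem length_ld (t : BTree) : t.ld.length = t.numLeaves := by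
  induction t with
  | leaf => rfl
  | node l r ihl ihr => simp [ld_node, numLeaves, ihl, ihr]

theorem length_rd (t : BTree) : t.rd.length = t.numLeaves := by
  simp [← length_ld, ld, rd]

theorem numLeaves_pos (t : BTree) : 0 < t.numLeaves := by
  induction t with
  | leaf => exact Nat.one_pos
  | node _ _ ihl _ => exact Nat.add_pos_left ihl _

theorem one_lt_numLeaves_node (l r : BTree) : 1 < (node l r).numLeaves :=
  Nat.add_le_add l.numLeaves_pos r.numLeaves_pos

/-- The mirror image of a tree. Since it exchanges left and right depths, statements about `rd`
reduce to statements about `ld`. -/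
def mirror : BTree → BTree
  | leaf => leaf
  | node l r => node r.mirror l.mirror

theorem ld_mirror (t : BTree) : t.mirror.ld = t.rd.reverse := by
  induction t with
  | leaf => rfl
  | node l r ihl ihr => simp [mirror, ld_node, rd_node, ihl, ihr]

theorem numLeaves_mirror (t : BTree) : t.mirror.numLeaves = t.numLeaves := by
  rw [← length_ld, ld_mirror, List.length_reverse, length_rd]

theorem depthEq_ld_mirror_iff {d : ℕ} {t t' : BTree} :
    DepthEq d t.mirror.ld t'.mirror.ld ↔ DepthEq d t.rd t'.rd := by
  rw [ld_mirror, ld_mirror]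
  exact List.forall₂_reverse_iff

theorem exists_ld_eq_map_succ_append_zero (t : BTree) :
    ∃ u : List ℕ, t.ld = u.map (· + 1) ++ [0] := by
  induction t with
  | leaf => exact ⟨[], rfl⟩
  | node l r _ ihr =>
    obtain ⟨u, hu⟩ := ihr
    exact ⟨l.ld ++ u, by simp [ld_node, hu]⟩

theorem depthEq_ld_iff_of_le_one {d : ℕ} (hd : d ≤ 1) (t t' : BTree) :
    DepthEq d t.ld t'.ld ↔ t.numLeaves = t'.numLeaves := by
  refine ⟨fun h => by simpa only [length_ld] using h.length_eq, fun h => ?_⟩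
  obtain ⟨u, hu⟩ := t.exists_ld_eq_map_succ_append_zero
  obtain ⟨u', hu'⟩ := t'.exists_ld_eq_map_succ_append_zero
  have hlen : u.length = u'.length := by simpa [← length_ld, hu, hu'] using h
  rw [hu, hu', depthEq_append_iff (by simpa using hlen), depthEq_map_succ_iff,
    Nat.sub_eq_zero_of_le hd, depthEq_zero_iff]
  exact ⟨hlen, DepthEq.refl d [0]⟩

theorem depthEq_rd_iff_of_le_one {e : ℕ} (he : e ≤ 1) (t t' : BTree) :
    DepthEq e t.rd t'.rd ↔ t.numLeaves = t'.numLeaves := by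
  rw [← depthEq_ld_mirror_iff, depthEq_ld_iff_of_le_one he, numLeaves_mirror, numLeaves_mirror]

theorem findIdx_le_one_ld_node (l r : BTree) :
    (node l r).ld.findIdx (· ≤ 1) + 1 = l.numLeaves := by
  obtain ⟨u, hu⟩ := l.exists_ld_eq_map_succ_append_zero
  have hsplit : (node l r).ld = u.map (· + 2) ++ 1 :: r.ld := by simp [ld_node, hu]
  have hnone : (u.map (· + 2)).findIdx (· ≤ 1) = u.length := by
    simp [List.findIdx_eq_length_of_false]
  rw [hsplit, List.findIdx_append, hnone]
  simp [← length_ld, hu, List.findIdx_cons]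

theorem numLeaves_left_eq_of_depthEq_ld {d : ℕ} (hd : 1 < d) {l r l' r' : BTree}
    (h : DepthEq d (node l r).ld (node l' r').ld) : l.numLeaves = l'.numLeaves := by
  rw [← findIdx_le_one_ld_node l r, ← findIdx_le_one_ld_node l' r', h.findIdx_le_eq hd]

theorem numLeaves_right_eq_of_depthEq_rd {e : ℕ} (he : 1 < e) {l r l' r' : BTree}
    (h : DepthEq e (node l r).rd (node l' r').rd) : r.numLeaves = r'.numLeaves := by
  rw [← numLeaves_mirror r, ← numLeaves_mirror r']
  exact numLeaves_left_eq_of_depthEq_ld he (depthEq_ld_mirror_iff.2 h)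

end BTree

section Recursion

open BTree

variable {d e : ℕ} {t t' l r l' r' : BTree}

theorem DeRel.numLeaves_eq (h : DeRel d e t t') : t.numLeaves = t'.numLeaves := by
  simpa only [length_ld] using h.1.length_eq

theorem DeRel.numLeaves_left_eq (hde : ¬(d ≤ 1 ∧ e ≤ 1))
    (h : DeRel d e (node l r) (node l' r')) : l.numLeaves = l'.numLeaves := by
  rcases Nat.lt_or_ge 1 d with hd | hd
  · exact numLeaves_left_eq_of_depthEq_ld hd h.1
  · have he : 1 < e := by omega
    have hright : r.numLeaves = r'.numLeaves := numLeaves_right_eq_of_depthEq_rd he h.2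
    have htotal : l.numLeaves + r.numLeaves = l'.numLeaves + r'.numLeaves := h.numLeaves_eq
    omega

theorem deRel_iff_of_le_one (hd : d ≤ 1) (he : e ≤ 1) :
    DeRel d e t t' ↔ t.numLeaves = t'.numLeaves := by
  rw [DeRel, depthEq_ld_iff_of_le_one hd, depthEq_rd_iff_of_le_one he, and_self]

theorem deRel_node_iff (hde : ¬(d ≤ 1 ∧ e ≤ 1)) :
    DeRel d e (node l r) (node l' r') ↔ DeRel (d - 1) e l l' ∧ DeRel d (e - 1) r r' := by
  have hsplit (hl : l.numLeaves = l'.numLeaves) :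
      DeRel d e (node l r) (node l' r') ↔ DeRel (d - 1) e l l' ∧ DeRel d (e - 1) r r' := by
    simp only [DeRel, ld_node, rd_node]
    rw [depthEq_append_iff (by simpa only [List.length_map, length_ld] using hl),
      depthEq_append_iff (by simpa only [length_rd] using hl),
      depthEq_map_succ_iff, depthEq_map_succ_iff, and_and_and_comm]
  exact ⟨fun h => (hsplit (h.numLeaves_left_eq hde)).1 h, fun h => (hsplit h.1.numLeaves_eq).2 h⟩

theorem phiAux_eq_phi (d e a b : ℕ) (t : BTree) :
    phiAux d e a b t = phi (d - a) (e - b) t := by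
  induction t generalizing d e a b with
  | leaf => rfl
  | node l r ihl ihr =>
    have hcond : (d - 1 ≤ a ∧ e - 1 ≤ b) ↔ (d - a - 1 ≤ 0 ∧ e - b - 1 ≤ 0) := by omega
    rw [phi, phiAux, phiAux]
    simp only [hcond, ihl, ihr, Nat.sub_zero, Nat.zero_add, Nat.sub_sub]

theorem phi_of_le_one (hd : d ≤ 1) (he : e ≤ 1) (t : BTree) :
    phi d e t = WTree.leaf t.numLeaves := by
  cases t with
  | leaf => rfl
  | node l r => exact if_pos (by omega)

theorem phi_node (hde : ¬(d ≤ 1 ∧ e ≤ 1)) (l r : BTree) :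
    phi d e (node l r) = WTree.node (phi (d - 1) e l) (phi d (e - 1) r) := by
  rw [phi, phiAux, if_neg (by omega), phiAux_eq_phi, phiAux_eq_phi]
  rfl

theorem phi_leaf_ne_phi_node (d e : ℕ) (l r : BTree) : phi d e leaf ≠ phi d e (node l r) := by
  by_cases hde : d ≤ 1 ∧ e ≤ 1
  · rw [phi_of_le_one hde.1 hde.2, phi_of_le_one hde.1 hde.2]
    exact fun h => (one_lt_numLeaves_node l r).ne (WTree.leaf.inj h)
  · rw [phi_node hde]
    exact WTree.noConfusion

end Recursion

theorem stmt0_general (d e : ℕ) (t t' : BTree) : DeRel d e t t' ↔ phi d e t = phi d e t' := by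
  induction t generalizing d e t' with
  | leaf =>
    cases t' with
    | leaf => exact iff_of_true ⟨DepthEq.refl d _, DepthEq.refl e _⟩ rfl
    | node l' r' =>
      exact iff_of_false (fun h => (BTree.one_lt_numLeaves_node l' r').ne h.numLeaves_eq)
        (phi_leaf_ne_phi_node d e l' r')
  | node l r ihl ihr =>
    cases t' with
    | leaf =>
      exact iff_of_false (fun h => (BTree.one_lt_numLeaves_node l r).ne' h.numLeaves_eq)
        (phi_leaf_ne_phi_node d e l r).symm
    | node l' r' =>
      by_cases hde : d ≤ 1 ∧ e ≤ 1
      · rw [deRel_iff_of_le_one hde.1 hde.2, phi_of_le_one hde.1 hde.2,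
          phi_of_le_one hde.1 hde.2, WTree.leaf.injEq]
      · rw [deRel_node_iff hde, phi_node hde, phi_node hde, WTree.node.injEq, ihl, ihr]

/-- for `d,e ≥ 1` and `t,t' ∈ T_n`, `ld(t) ~^d ld(t')` and `rd(t) ~^e rd(t')`
both hold iff `φ(t) = φ(t')`; hence the equivalence classes of this relation are exactly
the fibers of `φ`. -/
theorem stmt0 (d e n : ℕ) (hd : 1 ≤ d) (he : 1 ≤ e) (t t' : BTree)
    (ht : t.numLeaves = n + 1) (ht' : t'.numLeaves = n + 1) :
    (DepthEq d t.ld t'.ld ∧ DepthEq e t.rd t'.rd) ↔ phi d e t = phi d e t' := by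
  exact stmt0_general d e t t'
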